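/- Let $q = p^{\beta}$ with $p$ an odd prime, $\beta \geq 2$, and let $a, b$ be integers with $p \nmid ab$. If $ab$ is a quadratic residue modulo $p$ and $l$ satisfies $l^2 \equiv ab \pmod q$, then $S(a,b;q) = 2\left(\frac{l}{q}\right)\sqrt{q}\, \mathrm{Re}\!\left(\epsilon_q\, e(2l/q)\right)$, where $\epsilon_q = 1$ if $q \equiv 1 \pmod 4$ and $\epsilon_q = i$ if $q \equiv 3 \pmod 4$, $\left(\frac{\cdot}{q}\right)$ is the Jacobi symbol, and $e(t) = e^{2\pi i t}$. -/

import Mathlib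

/-- The classical Kloosterman sum `S(a,b;c)`. -/
noncomputable def kloosterman (a b : ℤ) (c : ℕ) : ℂ :=
  ∑ x ∈ Finset.range c, if Nat.gcd x c = 1 then
    Complex.exp (2 * Real.pi * Complex.I *
      ((a : ℂ) * (x : ℂ) + (b : ℂ) * ((((x : ZMod c)⁻¹).val : ℕ) : ℂ)) / (c : ℂ))
  else 0

/-! In a finite local ring in which `2` is a unit, pick `P ≠ 0` with `P ^ 2 = 0`. Multiplying `u` by
`1 + P * z` changes `u + u⁻¹` by `z * (P * (u - u⁻¹))`, so in the Kloosterman sum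
`∑ u, ψ (u + u⁻¹)` only the units with `P * (u - 1) = 0` or `P * (u + 1) = 0` survive. The two
halves are conjugate under `u ↦ -u`. If `P * w = 0` forces `w ^ 3 = 0`, the phase near `u = 1` is
exactly `u + u⁻¹ = 2 + (u - 1) ^ 2`, and the same localization applied to the quadratic Gauss sum
`G(ψ) = ∑ x, ψ (x ^ 2)` identifies this half with `ψ 2 * G(ψ)`. Since `l ^ 2 = a * b`, the sum
`S(a, b; q)` is the case `ψ x = e(l x / q)`.

Localization also gives `G(c; n m ^ 2) = m G(c; n)`, so the dependence of `G` on the coefficient `c`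
is reduced to modulus `1` or `p`. For odd `n`, Gauss's alternating sum of `q`-binomial coefficients
at a primitive `n`-th root of unity turns `G(1; n)` into a product of sines, whose sign together
with `|G| = √n` gives `G(1; n) = ε_n √n`.
-/

/-! ### Gaussian binomial coefficients -/

/-- The Gaussian binomial coefficient `[n choose k]_q`, defined by the `q`-Pascal recurrence so that
`q` may lie in any commutative ring. -/
def gaussBinom {R : Type*} [CommRing R] (q : R) : ℕ → ℕ → R
  | _, 0 => 1
  | 0, _ + 1 => 0
  | n + 1, k + 1 => gaussBinom q n k + q ^ (k + 1) * gaussBinom q n (k + 1)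

namespace gaussBinom

variable {R : Type*} [CommRing R] (q : R)

@[simp]
theorem zero_right (n : ℕ) : gaussBinom q n 0 = 1 := by
  cases n <;> rfl

theorem succ_succ (n k : ℕ) : gaussBinom q (n + 1) (k + 1) =
    gaussBinom q n k + q ^ (k + 1) * gaussBinom q n (k + 1) := rfl

theorem self_succ (n : ℕ) : gaussBinom q n (n + 1) = 0 := by
  suffices ∀ d, gaussBinom q n (n + d + 1) = 0 from this 0
  induction n with
  | zero => exact fun _ ↦ rfl
  | succ n ih =>
    intro d
    rw [succ_succ, add_right_comm n 1 d, ih, add_assoc n d 1, ih, mul_zero, add_zero]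

theorem one_sub_pow_mul_succ_succ (n k : ℕ) :
    (1 - q ^ (k + 1)) * gaussBinom q (n + 1) (k + 1) = (1 - q ^ (n + 1)) * gaussBinom q n k := by
  induction n generalizing k with
  | zero => cases k <;> simp [gaussBinom]
  | succ n ih =>
    have pascal := succ_succ q (n + 1) k
    cases k with
    | zero =>
      rw [zero_right] at pascal ⊢
      linear_combination (1 - q) * pascal + q * ih 0 + q * (1 - q ^ (n + 1)) * zero_right q n
    | succ k =>
      linear_combination (1 - q ^ (k + 2)) * pascal + q ^ (k + 2) * ih (k + 1) + q * ih k -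
        q * (1 - q ^ (n + 1)) * succ_succ q n k

theorem pow_mul_one_sub_pow_mul_succ (n k : ℕ) :
    q ^ (k + 1) * (1 - q ^ (k + 1)) * gaussBinom q n (k + 1) =
      (q ^ (k + 1) - q ^ (n + 1)) * gaussBinom q n k := by
  linear_combination one_sub_pow_mul_succ_succ q n k - (1 - q ^ (k + 1)) * succ_succ q n k

theorem sum_range_succ_mul_succ (n : ℕ) (c : ℕ → R) :
    ∑ k ∈ Finset.range (n + 1), c (k + 1) * gaussBinom q n (k + 1) =
      ∑ k ∈ Finset.range (n + 1), c k * gaussBinom q n k - c 0 := by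
  have h := Finset.sum_range_succ' (fun k ↦ c k * gaussBinom q n k) (n + 1)
  rw [Finset.sum_range_succ, self_succ, mul_zero, add_zero, zero_right, mul_one] at h
  exact eq_sub_of_add_eq h.symm

theorem sum_range_mul_succ (n : ℕ) (c : ℕ → R) :
    ∑ k ∈ Finset.range (n + 2), c k * gaussBinom q (n + 1) k =
      ∑ k ∈ Finset.range (n + 1), (c (k + 1) + q ^ k * c k) * gaussBinom q n k := by
  have shift := sum_range_succ_mul_succ q n fun k ↦ q ^ k * c k
  rw [pow_zero, one_mul, eq_sub_iff_add_eq] at shift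
  simp only [add_mul, Finset.sum_add_distrib]
  rw [Finset.sum_range_succ', zero_right, mul_one, ← shift, ← add_assoc, ← Finset.sum_add_distrib]
  congr 1
  exact Finset.sum_congr rfl fun k _ ↦ by rw [succ_succ]; ring

theorem sum_neg_one_pow_mul_succ (n : ℕ) :
    ∑ k ∈ Finset.range (n + 2), (-1) ^ k * gaussBinom q (n + 1) k =
      ∑ k ∈ Finset.range (n + 1), (-1) ^ k * q ^ k * gaussBinom q n k -
        ∑ k ∈ Finset.range (n + 1), (-1) ^ k * gaussBinom q n k := by
  rw [sum_range_mul_succ, ← Finset.sum_sub_distrib]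
  exact Finset.sum_congr rfl fun k _ ↦ by ring

theorem sum_neg_one_pow_mul_pow_mul_succ (n : ℕ) :
    ∑ k ∈ Finset.range (n + 2), (-1) ^ k * q ^ k * gaussBinom q (n + 1) k =
      ∑ k ∈ Finset.range (n + 1), (-1) ^ k * q ^ k * gaussBinom q n k -
        q ^ (n + 1) * ∑ k ∈ Finset.range (n + 1), (-1) ^ k * gaussBinom q n k := by
  have telescope :=
    sum_range_succ_mul_succ q n fun k ↦ (-1) ^ k * (q ^ k * (1 - q ^ k))
  rw [pow_zero, pow_zero, sub_self, mul_zero, mul_zero, sub_zero, ← sub_eq_zero,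
    ← Finset.sum_sub_distrib] at telescope
  rw [sum_range_mul_succ, ← sub_eq_zero, Finset.mul_sum, ← Finset.sum_sub_distrib,
    ← Finset.sum_sub_distrib, ← telescope]
  refine Finset.sum_congr rfl fun k _ ↦ ?_
  linear_combination (-1) ^ k * pow_mul_one_sub_pow_mul_succ q n k

theorem sum_neg_one_pow_mul_add_two (n : ℕ) :
    ∑ k ∈ Finset.range (n + 3), (-1) ^ k * gaussBinom q (n + 2) k =
      (1 - q ^ (n + 1)) * ∑ k ∈ Finset.range (n + 1), (-1) ^ k * gaussBinom q n k := by
  rw [sum_neg_one_pow_mul_succ, sum_neg_one_pow_mul_pow_mul_succ, sum_neg_one_pow_mul_succ]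
  ring

theorem sum_neg_one_pow_mul_two_mul (m : ℕ) :
    ∑ k ∈ Finset.range (2 * m + 1), (-1) ^ k * gaussBinom q (2 * m) k =
      ∏ i ∈ Finset.range m, (1 - q ^ (2 * i + 1)) := by
  induction m with
  | zero => simp
  | succ m ih =>
    rw [Finset.prod_range_succ, ← ih, mul_add_one, sum_neg_one_pow_mul_add_two, mul_comm]

theorem pow_choose_two_mul_of_isPrimitiveRoot [IsDomain R] {q : R} {n k : ℕ}
    (hq : IsPrimitiveRoot q (n + 1)) (hk : k ≤ n) :
    q ^ (k + 1).choose 2 * gaussBinom q n k = (-1) ^ k := by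
  induction k with
  | zero => simp
  | succ k ih =>
    have hqk : 1 - q ^ (k + 1) ≠ 0 :=
      sub_ne_zero.mpr (hq.pow_ne_one_of_pos_of_lt k.succ_ne_zero (Nat.succ_lt_succ hk)).symm
    have hstep : q ^ (k + 1) * gaussBinom q n (k + 1) = -gaussBinom q n k := by
      apply mul_left_cancel₀ hqk
      linear_combination pow_mul_one_sub_pow_mul_succ q n k - gaussBinom q n k * hq.pow_eq_one
    rw [Nat.choose_succ_succ' (k + 1) 1, Nat.choose_one_right, pow_add, mul_right_comm, hstep,
      pow_succ, ← ih (Nat.le_of_succ_le hk)]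
    ring

end gaussBinom

theorem sum_pow_choose_two_of_isPrimitiveRoot {K : Type*} [Field K] {ζ : K} {m : ℕ}
    (hζ : IsPrimitiveRoot ζ (2 * m + 1)) :
    ∑ k ∈ Finset.range (2 * m + 1), ζ ^ (k + 1).choose 2 =
      ∏ i ∈ Finset.range m, (1 - ζ⁻¹ ^ (2 * i + 1)) := by
  rw [← gaussBinom.sum_neg_one_pow_mul_two_mul]
  refine Finset.sum_congr rfl fun k hk ↦ ?_
  have hζ0 : ζ ^ (k + 1).choose 2 ≠ 0 := pow_ne_zero _ (hζ.ne_zero (2 * m).succ_ne_zero)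
  have hbinom := gaussBinom.pow_choose_two_mul_of_isPrimitiveRoot hζ.inv
    (Nat.lt_succ_iff.mp (Finset.mem_range.mp hk))
  rw [inv_pow, inv_mul_eq_iff_eq_mul₀ hζ0] at hbinom
  rw [hbinom, mul_left_comm, ← mul_pow, neg_one_mul, neg_neg, one_pow, mul_one]

/-! ### Stationary phase and quadratic Gauss sums -/

theorem isPrimitive_mulShift_of_isUnit {R M : Type*} [CommRing R] [CommMonoid M]
    {ψ : AddChar R M} (hψ : ψ.IsPrimitive) {c : R} (hc : IsUnit c) :
    (ψ.mulShift c).IsPrimitive := by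
  intro a ha
  rw [AddChar.mulShift_mulShift]
  exact hψ (hc.mul_right_eq_zero.not.mpr ha)

theorem sum_addChar_eq_sum_stationary {R R' X : Type*} [CommRing R] [Finite R] [DecidableEq R]
    [CommRing R'] [IsDomain R'] [CharZero R'] [Fintype X] {ψ : AddChar R R'} (hψ : ψ.IsPrimitive)
    (φ φ' : X → R) (translate : R → X ≃ X)
    (htranslate : ∀ z x, φ (translate z x) = φ x + z * φ' x) :
    ∑ x, ψ (φ x) = ∑ x with φ' x = 0, ψ (φ x) := by
  cases nonempty_fintype R
  apply mul_left_cancel₀ (Nat.cast_ne_zero.mpr Fintype.card_ne_zero : (Fintype.card R : R') ≠ 0)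
  calc (Fintype.card R : R') * ∑ x, ψ (φ x)
      = ∑ z : R, ∑ x, ψ (φ (translate z x)) := by
        simp only [Equiv.sum_comp (translate _) fun x ↦ ψ (φ x), Finset.sum_const,
          Finset.card_univ, nsmul_eq_mul]
    -- By orthogonality the inner sum vanishes at every non-stationary point.
    _ = ∑ x, ψ (φ x) * ∑ z, ψ (z * φ' x) := by
        rw [Finset.sum_comm]
        simp only [htranslate, AddChar.map_add_eq_mul, Finset.mul_sum]
    _ = Fintype.card R * ∑ x with φ' x = 0, ψ (φ x) := by
        simp only [AddChar.sum_mulShift _ hψ, Nat.cast_ite, Nat.cast_zero, mul_ite, mul_zero,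
          ← Finset.sum_filter, ← Finset.sum_mul]
        exact mul_comm _ _

section QuadraticGaussSum

variable {R R' : Type*} [CommRing R] [Fintype R] [CommRing R']

/-- The quadratic Gauss sum of an additive character `ψ` of a finite ring. The sum with an extra
coefficient, `∑ x, ψ (c * x ^ 2)`, is `quadraticGaussSum (ψ.mulShift c)`. -/
def quadraticGaussSum (ψ : AddChar R R') : R' :=
  ∑ x, ψ (x ^ 2)

theorem quadraticGaussSum_eq_sum_filter [DecidableEq R] [IsDomain R'] [CharZero R']
    {ψ : AddChar R R'} (hψ : ψ.IsPrimitive) (h2 : IsUnit (2 : R)) {P : R} (hP : P ^ 2 = 0) :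
    quadraticGaussSum ψ = ∑ x with P * x = 0, ψ (x ^ 2) := by
  rw [quadraticGaussSum, sum_addChar_eq_sum_stationary hψ (fun x ↦ x ^ 2) (fun x ↦ 2 * (P * x))
    (fun z ↦ Equiv.addRight (P * z))
    fun z x ↦ by rw [Equiv.coe_addRight]; linear_combination z ^ 2 * hP]
  simp only [h2.mul_right_eq_zero]

end QuadraticGaussSum

open ComplexConjugate in
theorem norm_quadraticGaussSum {R : Type*} [CommRing R] [Fintype R] {ψ : AddChar R ℂ}
    (hψ : ψ.IsPrimitive) (h2 : IsUnit (2 : R)) :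
    ‖quadraticGaussSum ψ‖ = √(Fintype.card R) := by
  classical
  have hmul_conj : quadraticGaussSum ψ * conj (quadraticGaussSum ψ) = Fintype.card R :=
    calc quadraticGaussSum ψ * conj (quadraticGaussSum ψ)
        = ∑ y, ∑ x, ψ (x ^ 2) * conj (ψ (y ^ 2)) := by
          simp only [quadraticGaussSum, map_sum, Finset.sum_mul_sum]
          exact Finset.sum_comm
      _ = ∑ y, ∑ x, ψ ((x + y) ^ 2) * conj (ψ (y ^ 2)) :=
          Finset.sum_congr rfl fun y _ ↦
            (Equiv.sum_comp (Equiv.addRight y) fun x ↦ ψ (x ^ 2) * conj (ψ (y ^ 2))).symm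
      _ = ∑ x, ψ (x ^ 2) * ∑ y, ψ (y * (2 * x)) := by
          rw [Finset.sum_comm]
          refine Finset.sum_congr rfl fun x _ ↦ ?_
          rw [Finset.mul_sum]
          refine Finset.sum_congr rfl fun y _ ↦ ?_
          rw [← AddChar.map_neg_eq_conj, ← AddChar.map_add_eq_mul, ← AddChar.map_add_eq_mul]
          ring_nf
      _ = Fintype.card R := by
          simp [AddChar.sum_mulShift _ hψ, h2.mul_right_eq_zero]
  rw [Complex.mul_conj, Complex.normSq_eq_norm_sq] at hmul_conj
  rw [eq_comm, Real.sqrt_eq_iff_eq_sq (Nat.cast_nonneg _) (norm_nonneg _)]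
  exact_mod_cast hmul_conj.symm

section FiniteField

variable {F R' : Type*} [Field F] [Fintype F] [DecidableEq F] [CommRing R']

theorem quadraticGaussSum_eq_gaussSum [IsDomain R'] (hF : ringChar F ≠ 2) {ψ : AddChar F R'}
    (hψ : ψ ≠ 1) :
    quadraticGaussSum ψ = gaussSum ((quadraticChar F).ringHomComp (Int.castRingHom R')) ψ := by
  have hfiber (t : F) : ∑ x with x ^ 2 = t, ψ (x ^ 2) = (quadraticChar F t + 1 : ℤ) * ψ t := by
    rw [← quadraticChar_card_sqrts hF t, Set.toFinset_ofPred, Int.cast_natCast, ← nsmul_eq_mul]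
    exact Finset.sum_eq_card_nsmul fun x hx ↦ congrArg ψ (Finset.mem_filter.mp hx).2
  rw [quadraticGaussSum, ← Finset.sum_fiberwise Finset.univ (· ^ 2)]
  simp only [hfiber, Int.cast_add, Int.cast_one, add_mul, one_mul, Finset.sum_add_distrib,
    AddChar.sum_eq_zero_of_ne_one hψ, add_zero]
  rfl

theorem quadraticGaussSum_mulShift [IsDomain R'] (hF : ringChar F ≠ 2) {ψ : AddChar F R'}
    (hψ : ψ ≠ 1) {c : F} (hc : c ≠ 0) :
    quadraticGaussSum (ψ.mulShift c) = quadraticChar F c * quadraticGaussSum ψ := by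
  have hquad := (quadraticChar_isQuadratic F).comp (Int.castRingHom R')
  rw [quadraticGaussSum_eq_gaussSum hF hψ,
    quadraticGaussSum_eq_gaussSum hF (AddChar.IsPrimitive.of_ne_one hψ hc)]
  have h := gaussSum_mulShift_eq ((quadraticChar F).ringHomComp (Int.castRingHom R')) ψ
    (Units.mk0 c hc)
  rw [hquad.inv] at h
  exact h

end FiniteField

/-! ### Kloosterman sums over local rings -/

section KloostermanSum

variable {R R' : Type*} [CommRing R] [Fintype Rˣ] [CommRing R']

/-- The Kloosterman sum of an additive character `ψ` of a commutative ring with finitely many units;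
`kloosterman a b c` is the case of the standard additive character of `ZMod c`. -/
def kloostermanSum (ψ : AddChar R R') (a b : R) : R' :=
  ∑ u : Rˣ, ψ (a * u + b * (u⁻¹ : Rˣ))

theorem kloostermanSum_one_one (ψ : AddChar R R') :
    kloostermanSum ψ 1 1 = ∑ u : Rˣ, ψ (u + (u⁻¹ : Rˣ)) := by
  simp only [kloostermanSum, one_mul]

theorem kloostermanSum_mul_unit (ψ : AddChar R R') (a b : R) (v : Rˣ) :
    kloostermanSum ψ (a * v) b = kloostermanSum ψ a (b * v) := by
  rw [kloostermanSum, ← Equiv.sum_comp (Equiv.mulRight v⁻¹)]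
  refine Finset.sum_congr rfl fun u _ ↦ ?_
  rw [Equiv.coe_mulRight, mul_inv, inv_inv, Units.val_mul, Units.val_mul]
  congr 1
  linear_combination a * u * v.mul_inv

theorem kloostermanSum_eq_of_sq_eq_mul (ψ : AddChar R R') {a b l : R} (hl : IsUnit l)
    (h : l ^ 2 = a * b) : kloostermanSum ψ a b = kloostermanSum (ψ.mulShift l) 1 1 := by
  obtain ⟨l, rfl⟩ := hl
  obtain ⟨a, rfl⟩ := isUnit_of_mul_isUnit_left (h ▸ l.isUnit.pow 2)
  have ha : l * ((l⁻¹ * a : Rˣ) : R) = a := by simp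
  have hb : b * ((l⁻¹ * a : Rˣ) : R) = l := by
    rw [Units.val_mul]
    linear_combination -(l⁻¹ : Rˣ) * h + l * l.inv_mul
  rw [← ha, kloostermanSum_mul_unit, hb, kloostermanSum_one_one, kloostermanSum]
  simp only [AddChar.mulShift_apply, mul_add]

end KloostermanSum

theorem mul_val_sub_val_inv_eq_zero_iff {R : Type*} [CommRing R] [IsLocalRing R]
    (h2 : IsUnit (2 : R)) (P : R) (u : Rˣ) :
    P * (u - (u⁻¹ : Rˣ)) = 0 ↔ P * (u - 1) = 0 ∨ P * (u + 1) = 0 := by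
  have hfactor : P * (u - (u⁻¹ : Rˣ)) * u = P * (u - 1) * (u + 1) := by
    linear_combination -P * u.inv_mul
  rw [← u.isUnit.mul_left_eq_zero, hfactor]
  constructor
  · intro h
    have hunit : IsUnit ((u + 1 : R) + (1 - u)) := by convert h2 using 1; ring
    rcases IsLocalRing.isUnit_or_isUnit_of_isUnit_add hunit with hu | hu
    · exact Or.inl (hu.mul_left_eq_zero.mp h)
    · exact Or.inr (hu.mul_left_eq_zero.mp (by linear_combination -h))
  · rintro (h | h)
    · rw [h, zero_mul]
    · rw [mul_right_comm, h, zero_mul]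

theorem val_add_val_inv_eq {R : Type*} [CommRing R] (u : Rˣ) (hu : ((u : R) - 1) ^ 3 = 0) :
    (u : R) + (u⁻¹ : Rˣ) = 2 + (u - 1) ^ 2 := by
  linear_combination -((u⁻¹ : Rˣ) : R) * hu + (u ^ 2 - 3 * u + 3) * u.inv_mul

section LocalRing

variable {R : Type*} [CommRing R] [Fintype R] [DecidableEq R] {P : R}

theorem sum_units_near_one {R' : Type*} [CommRing R'] (ψ : AddChar R R')
    (hcube : ∀ w, P * w = 0 → w ^ 3 = 0) :
    ∑ u with P * (Units.val u - 1) = 0, ψ (u + (u⁻¹ : Rˣ)) =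
      ψ 2 * ∑ w with P * w = 0, ψ (w ^ 2) := by
  rw [Finset.mul_sum]
  refine Finset.sum_bij (fun u _ ↦ (u : R) - 1) ?_ ?_ ?_ ?_
  · exact fun u hu ↦ Finset.mem_filter.mpr ⟨Finset.mem_univ _, (Finset.mem_filter.mp hu).2⟩
  · exact fun u _ v _ h ↦ Units.ext (sub_left_inj.mp h)
  · intro w hw
    have hw := (Finset.mem_filter.mp hw).2
    obtain ⟨u, hu⟩ := IsNilpotent.isUnit_one_add ⟨3, hcube w hw⟩
    exact ⟨u, by simpa [hu] using hw, by rw [hu, add_sub_cancel_left]⟩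
  · intro u hu
    rw [val_add_val_inv_eq u (hcube _ (Finset.mem_filter.mp hu).2), AddChar.map_add_eq_mul]

theorem kloostermanSum_one_one_eq_sum_stationary {R' : Type*} [CommRing R'] [IsDomain R']
    [CharZero R'] {ψ : AddChar R R'} (hψ : ψ.IsPrimitive) (hP : P ^ 2 = 0) :
    kloostermanSum ψ 1 1 =
      ∑ u with P * (Units.val u - Units.val u⁻¹) = 0, ψ (u + (u⁻¹ : Rˣ)) := by
  let t (z : R) : Rˣ := ⟨1 + P * z, 1 - P * z, by linear_combination -z ^ 2 * hP,
    by linear_combination -z ^ 2 * hP⟩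
  rw [kloostermanSum_one_one]
  refine sum_addChar_eq_sum_stationary hψ _ _ (fun z ↦ Equiv.mulRight (t z)) fun z u ↦ ?_
  have ht : ((t z : Rˣ) : R) = 1 + P * z := rfl
  have ht_inv : ((t z)⁻¹ : Rˣ) = 1 - P * z := rfl
  rw [Equiv.coe_mulRight, mul_inv, Units.val_mul, Units.val_mul, ht, ht_inv]
  ring

open ComplexConjugate in
theorem kloostermanSum_one_one_eq_two_mul_re [IsLocalRing R] {ψ : AddChar R ℂ}
    (hψ : ψ.IsPrimitive) (h2 : IsUnit (2 : R)) (hP : P ^ 2 = 0) (hP0 : P ≠ 0)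
    (hcube : ∀ w, P * w = 0 → w ^ 3 = 0) :
    kloostermanSum ψ 1 1 = (2 * (ψ 2 * quadraticGaussSum ψ).re : ℝ) := by
  have hdisjoint : Disjoint (Finset.univ.filter fun u : Rˣ ↦ P * ((u : R) - 1) = 0)
      (Finset.univ.filter fun u : Rˣ ↦ P * ((u : R) + 1) = 0) := by
    rw [Finset.disjoint_filter]
    intro u _ hsub hadd
    exact hP0 (h2.mul_left_eq_zero.mp (by linear_combination hadd - hsub))
  have hconj : ∑ u with P * (Units.val u + 1) = 0, ψ (u + (u⁻¹ : Rˣ)) =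
      conj (∑ u with P * (Units.val u - 1) = 0, ψ (u + (u⁻¹ : Rˣ))) := by
    rw [map_sum]
    refine Finset.sum_equiv (Equiv.neg Rˣ) (fun u ↦ ?_) fun u _ ↦ ?_
    · have hneg : P * (((-u : Rˣ) : R) - 1) = -(P * (u + 1)) := by rw [Units.val_neg]; ring
      simp only [Finset.mem_filter, Finset.mem_univ, true_and, Equiv.neg_apply, hneg, neg_eq_zero]
    · rw [← AddChar.map_neg_eq_conj, Equiv.neg_apply, inv_neg, Units.val_neg, Units.val_neg,
        neg_add, neg_neg, neg_neg]
  rw [kloostermanSum_one_one_eq_sum_stationary hψ hP]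
  simp only [mul_val_sub_val_inv_eq_zero_iff h2]
  rw [Finset.filter_or, Finset.sum_union hdisjoint, hconj, Complex.add_conj,
    sum_units_near_one ψ hcube, ← quadraticGaussSum_eq_sum_filter hψ h2 hP]

end LocalRing

/-! ### The sign of the quadratic Gauss sum -/

theorem sum_range_natCast_zmod {M : Type*} [AddCommMonoid M] (n : ℕ) [NeZero n]
    (f : ZMod n → M) : ∑ j ∈ Finset.range n, f j = ∑ x, f x :=
  Finset.sum_bij' (fun j _ ↦ (j : ZMod n)) (fun x _ ↦ x.val) (fun _ _ ↦ Finset.mem_univ _)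
    (fun x _ ↦ Finset.mem_range.mpr x.val_lt)
    (fun _ hj ↦ ZMod.val_cast_of_lt (Finset.mem_range.mp hj)) (fun x _ ↦ ZMod.natCast_zmod_val x)
    (fun _ _ ↦ rfl)

theorem isUnit_two_zmod_of_odd {n : ℕ} (hn : Odd n) : IsUnit (2 : ZMod n) :=
  (ZMod.isUnit_iff_coprime 2 n).mpr (Nat.coprime_two_left.mpr hn)

theorem isPrimitiveRoot_addChar_of_isUnit {M : Type*} [CommMonoid M] {n : ℕ} [NeZero n]
    {ψ : AddChar (ZMod n) M} (hψ : ψ.IsPrimitive) {a : ZMod n} (ha : IsUnit a) :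
    IsPrimitiveRoot (ψ a) n := by
  have hpow (k : ℕ) : ψ a ^ k = 1 ↔ n ∣ k := by
    rw [← AddChar.map_nsmul_eq_pow, hψ.zmod_char_eq_one_iff, nsmul_eq_mul, ha.mul_left_eq_zero,
      ZMod.natCast_eq_zero_iff]
  exact ⟨(hpow n).mpr dvd_rfl, fun k ↦ (hpow k).mp⟩

section OddModulus

variable {m : ℕ}

theorem two_mul_add_one_zmod_eq_zero : (2 * m + 1 : ZMod (2 * m + 1)) = 0 := by
  exact_mod_cast ZMod.natCast_self (2 * m + 1)

theorem quadraticGaussSum_eq_mul_sum_pow_choose_two {M : Type*} [CommRing M]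
    (ψ : AddChar (ZMod (2 * m + 1)) M) :
    quadraticGaussSum ψ =
      ψ ((m + 1) ^ 2) * ∑ k ∈ Finset.range (2 * m + 1), ψ 2 ^ (k + 1).choose 2 := by
  rw [quadraticGaussSum,
    ← Equiv.sum_comp (Equiv.addRight ((m : ZMod (2 * m + 1)) + 1)) fun x ↦ ψ (x ^ 2),
    ← sum_range_natCast_zmod, Finset.mul_sum]
  refine Finset.sum_congr rfl fun k _ ↦ ?_
  have hchoose : ((k + 1).choose 2 * 2 : ZMod (2 * m + 1)) = (k + 1) * k := by
    exact_mod_cast congrArg Nat.cast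
      ((Nat.add_one_mul_choose_eq k 1).symm.trans (by rw [Nat.choose_one_right]))
  rw [← AddChar.map_nsmul_eq_pow, ← AddChar.map_add_eq_mul, nsmul_eq_mul, hchoose,
    Equiv.coe_addRight]
  congr 1
  linear_combination k * two_mul_add_one_zmod_eq_zero (m := m)

theorem prod_addChar_odd {A M : Type*} [Ring A] [CommMonoid M] (ψ : AddChar A M) (m : ℕ) :
    ∏ i ∈ Finset.range m, ψ (2 * i + 1) = ψ (m ^ 2) := by
  induction m with
  | zero => simp
  | succ m ih =>
    rw [Finset.prod_range_succ, ih, ← AddChar.map_add_eq_mul]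
    push_cast
    congr 1
    noncomm_ring

theorem quadraticGaussSum_eq_prod {K : Type*} [Field K] {ψ : AddChar (ZMod (2 * m + 1)) K}
    (hψ : ψ.IsPrimitive) :
    quadraticGaussSum ψ = ∏ i ∈ Finset.range m, (ψ (2 * i + 1) - ψ (-(2 * i + 1))) := by
  have hfactor (i : ℕ) : ψ (2 * i + 1) - ψ (-(2 * i + 1)) =
      ψ (2 * i + 1) * (1 - (ψ 2)⁻¹ ^ (2 * i + 1)) := by
    rw [← AddChar.map_neg_eq_inv, ← AddChar.map_nsmul_eq_pow, mul_sub, mul_one,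
      ← AddChar.map_add_eq_mul]
    congr 2
    push_cast [nsmul_eq_mul]
    ring
  have hζ := isPrimitiveRoot_addChar_of_isUnit hψ (isUnit_two_zmod_of_odd ⟨m, rfl⟩)
  rw [Finset.prod_congr rfl fun i _ ↦ hfactor i, Finset.prod_mul_distrib, prod_addChar_odd,
    ← sum_pow_choose_two_of_isPrimitiveRoot hζ, quadraticGaussSum_eq_mul_sum_pow_choose_two]
  congr 2
  linear_combination two_mul_add_one_zmod_eq_zero (m := m)

end OddModulus

open Real in
theorem sin_two_pi_mul_div_pos {x y : ℝ} (hx : 0 < x) (hxy : 2 * x < y) :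
    0 < sin (2 * π * x / y) := by
  have hy : 0 < y := by linarith
  apply sin_pos_of_pos_of_lt_pi (by positivity)
  rw [div_lt_iff₀ hy]
  nlinarith [pi_pos]

open Real in
theorem sin_two_pi_mul_div_neg {x y : ℝ} (hyx : y < 2 * x) (hxy : x < y) :
    sin (2 * π * x / y) < 0 := by
  have hreflect : 2 * π * x / y = -(2 * π * (y - x) / y) + 2 * π := by
    have hy : y ≠ 0 := by linarith
    field_simp
    ring
  rw [hreflect, sin_add_two_pi, sin_neg, neg_lt_zero]
  exact sin_two_pi_mul_div_pos (by linarith) (by linarith)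

open Real in
theorem neg_one_pow_mul_prod_sin_pos (m : ℕ) :
    0 < (-1) ^ (m / 2) * ∏ i ∈ Finset.range m, sin (2 * π * (2 * i + 1) / (2 * m + 1)) := by
  -- The first `(m + 1) / 2` angles lie in `(0, π)`, the other `m / 2` in `(π, 2π)`.
  have hsplit : m = (m + 1) / 2 + m / 2 := by lia
  nth_rw 2 [hsplit]
  have hsign : (-1 : ℝ) ^ (m / 2) = ∏ _i ∈ Finset.range (m / 2), (-1) := by simp
  rw [Finset.prod_range_add, mul_left_comm, hsign, ← Finset.prod_mul_distrib]
  refine mul_pos (Finset.prod_pos fun i hi ↦ ?_) (Finset.prod_pos fun i hi ↦ ?_)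
  · have hi : 2 * (2 * i + 1) < 2 * m + 1 := by have := Finset.mem_range.mp hi; lia
    exact sin_two_pi_mul_div_pos (by positivity) (by exact_mod_cast hi)
  · have hi := Finset.mem_range.mp hi
    have hlt : 2 * ((m + 1) / 2 + i) + 1 < 2 * m + 1 := by lia
    have hgt : 2 * m + 1 < 2 * (2 * ((m + 1) / 2 + i) + 1) := by lia
    rw [neg_one_mul, neg_pos]
    exact sin_two_pi_mul_div_neg (by exact_mod_cast hgt) (by exact_mod_cast hlt)

/-- The sign `ε_n` of the quadratic Gauss sum of odd modulus `n`; the value at even `n` is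
meaningless. -/
noncomputable def gaussEpsilon (n : ℕ) : ℂ :=
  if n % 4 = 1 then 1 else Complex.I

theorem norm_gaussEpsilon (n : ℕ) : ‖gaussEpsilon n‖ = 1 := by
  unfold gaussEpsilon
  split_ifs <;> simp

theorem I_pow_eq_gaussEpsilon_mul (m : ℕ) :
    Complex.I ^ m = gaussEpsilon (2 * m + 1) * (-1) ^ (m / 2) := by
  rcases Nat.even_or_odd' m with ⟨k, rfl | rfl⟩
  · rw [gaussEpsilon, if_pos (by lia), pow_mul, Complex.I_sq, one_mul]
    congr 1
    lia
  · rw [gaussEpsilon, if_neg (by lia), pow_succ', pow_mul, Complex.I_sq]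
    congr 2
    lia

open Complex ZMod in
theorem stdAddChar_sub_stdAddChar_neg {n : ℕ} [NeZero n] (j : ℤ) :
    (stdAddChar (j : ZMod n) - stdAddChar (-j : ZMod n) : ℂ) =
      2 * I * Real.sin (2 * Real.pi * j / n) := by
  rw [← Int.cast_neg, stdAddChar_coe, stdAddChar_coe, ofReal_sin, sin]
  field_simp
  rw [I_sq]
  push_cast
  ring_nf

open ZMod in
theorem exists_pos_quadraticGaussSum_stdAddChar_eq {n : ℕ} [NeZero n] (hn : Odd n) :
    ∃ r : ℝ, 0 < r ∧ quadraticGaussSum (stdAddChar (N := n)) = gaussEpsilon n * r := by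
  obtain ⟨m, rfl⟩ := hn
  refine ⟨_, mul_pos (pow_pos two_pos m) (neg_one_pow_mul_prod_sin_pos m), ?_⟩
  have hfactor (i : ℕ) := stdAddChar_sub_stdAddChar_neg (n := 2 * m + 1) (2 * i + 1)
  push_cast at hfactor
  rw [quadraticGaussSum_eq_prod (isPrimitive_stdAddChar _),
    Finset.prod_congr rfl fun i _ ↦ hfactor i, Finset.prod_mul_distrib, Finset.prod_const,
    Finset.card_range, mul_pow, I_pow_eq_gaussEpsilon_mul]
  push_cast
  ring

open ZMod in
theorem quadraticGaussSum_stdAddChar {n : ℕ} [NeZero n] (hn : Odd n) :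
    quadraticGaussSum (stdAddChar (N := n)) = gaussEpsilon n * √n := by
  obtain ⟨r, hr, h⟩ := exists_pos_quadraticGaussSum_stdAddChar_eq hn
  have hnorm := norm_quadraticGaussSum (isPrimitive_stdAddChar n) (isUnit_two_zmod_of_odd hn)
  rw [h, norm_mul, norm_gaussEpsilon, one_mul, Complex.norm_real, Real.norm_of_nonneg hr.le,
    ZMod.card] at hnorm
  rw [h, hnorm]

/-! ### Prime power moduli -/

section SquareFactor

variable {n m : ℕ}

theorem sum_range_mul_natCast_zmod [NeZero n] {M : Type*} [AddCommMonoid M] (f : ZMod n → M) :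
    ∑ j ∈ Finset.range (n * m), f j = m • ∑ x, f x := by
  induction m with
  | zero => simp
  | succ m ih =>
    rw [mul_add_one, Finset.sum_range_add, ih, succ_nsmul, ← sum_range_natCast_zmod]
    simp

theorem sum_filter_natCast_mul_eq_zero [NeZero n] [NeZero m] {M : Type*} [AddCommMonoid M]
    (f : ZMod (n * m) → M) :
    ∑ x with (n : ZMod (n * m)) * x = 0, f x = ∑ j ∈ Finset.range n, f (m * j) := by
  have hm : 0 < m := Nat.pos_of_neZero m
  have hdvd (x : ZMod (n * m)) : n * x = 0 ↔ m ∣ x.val := by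
    rw [← Nat.mul_dvd_mul_iff_left (Nat.pos_of_neZero n), ← ZMod.natCast_eq_zero_iff,
      Nat.cast_mul, ZMod.natCast_zmod_val]
  have hval {j : ℕ} (hj : j < n) : (m * j : ZMod (n * m)).val = m * j := by
    rw [← Nat.cast_mul, ZMod.val_cast_of_lt (by rw [mul_comm n]; gcongr)]
  symm
  refine Finset.sum_bij' (fun j _ ↦ (m * j : ZMod (n * m))) (fun x _ ↦ x.val / m) ?_ ?_ ?_ ?_
    fun _ _ ↦ rfl
  · intro j hj
    rw [Finset.mem_filter, hdvd, hval (Finset.mem_range.mp hj)]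
    exact ⟨Finset.mem_univ _, dvd_mul_right m j⟩
  · intro x _
    exact Finset.mem_range.mpr (Nat.div_lt_of_lt_mul (x.val_lt.trans_eq (mul_comm n m)))
  · intro j hj
    rw [hval (Finset.mem_range.mp hj), Nat.mul_div_cancel_left j hm]
  · intro x hx
    rw [Finset.mem_filter, hdvd] at hx
    rw [← Nat.cast_mul, Nat.mul_div_cancel' hx.2, ZMod.natCast_zmod_val]

variable [NeZero n] [NeZero m]

open ZMod

theorem stdAddChar_natCast_mul_intCast (t : ℤ) :
    stdAddChar (m * t : ZMod (n * m)) = stdAddChar (t : ZMod n) := by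
  have h := stdAddChar_coe (N := n * m) (m * t)
  have hm : (m : ℂ) ≠ 0 := NeZero.ne _
  push_cast at h
  rw [h, stdAddChar_coe, mul_left_comm, mul_comm (n : ℂ), mul_div_mul_left _ _ hm]

theorem quadraticGaussSum_stdAddChar_mulShift_mul_mul (hn : Odd (n * m * m)) {c : ℤ}
    (hc : IsUnit (c : ZMod (n * m * m))) :
    quadraticGaussSum ((stdAddChar (N := n * m * m)).mulShift c) =
      m * quadraticGaussSum ((stdAddChar (N := n)).mulShift c) := by
  have hP : ((n * m : ℕ) : ZMod (n * m * m)) ^ 2 = 0 := by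
    rw [← Nat.cast_pow, ZMod.natCast_eq_zero_iff]
    exact ⟨n, by ring⟩
  have hphase (j : ℕ) : (stdAddChar (N := n * m * m)).mulShift c ((m * j) ^ 2) =
      (stdAddChar (N := n)).mulShift c ((j : ZMod n) ^ 2) := by
    have h₁ := stdAddChar_natCast_mul_intCast (n := n * m) (m := m) (m * (c * j ^ 2))
    have h₂ := stdAddChar_natCast_mul_intCast (n := n) (m := m) (c * j ^ 2)
    push_cast at h₁ h₂
    rw [AddChar.mulShift_apply, AddChar.mulShift_apply, ← h₂, ← h₁]
    congr 1
    ring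
  rw [quadraticGaussSum_eq_sum_filter
      (isPrimitive_mulShift_of_isUnit (isPrimitive_stdAddChar _) hc) (isUnit_two_zmod_of_odd hn) hP,
    sum_filter_natCast_mul_eq_zero]
  simp only [hphase]
  rw [sum_range_mul_natCast_zmod fun x : ZMod n ↦ (stdAddChar (N := n)).mulShift c (x ^ 2),
    nsmul_eq_mul, quadraticGaussSum]

end SquareFactor

section PrimePower

variable {p : ℕ} [Fact p.Prime]

theorem isUnit_intCast_zmod_prime_pow {z : ℤ} (hz : ¬(p : ℤ) ∣ z) (β : ℕ) :
    IsUnit (z : ZMod (p ^ β)) := by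
  rw [ZMod.coe_int_isUnit_iff_isCoprime, Nat.cast_pow]
  exact ((Nat.prime_iff_prime_int.mp Fact.out).coprime_iff_not_dvd.mpr hz).pow_left

open ZMod

theorem quadraticGaussSum_stdAddChar_mulShift_prime (hp : p ≠ 2) {c : ℤ} (hc : ¬(p : ℤ) ∣ c) :
    quadraticGaussSum ((stdAddChar (N := p)).mulShift c) =
      jacobiSym c p * quadraticGaussSum (stdAddChar (N := p)) := by
  have hψ : stdAddChar (N := p) ≠ 1 := by simpa using isPrimitive_stdAddChar p one_ne_zero
  rw [quadraticGaussSum_mulShift (by rwa [ZMod.ringChar_zmod_n]) hψ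
    (by rwa [Ne, ZMod.intCast_zmod_eq_zero_iff_dvd]), ← jacobiSym.legendreSym.to_jacobiSym,
    legendreSym]

theorem quadraticGaussSum_stdAddChar_mulShift_of_eq_prime_pow (hp : p ≠ 2) {c : ℤ}
    (hc : ¬(p : ℤ) ∣ c) {n β : ℕ} [NeZero n] (hn : n = p ^ β) :
    quadraticGaussSum ((stdAddChar (N := n)).mulShift c) =
      jacobiSym c n * quadraticGaussSum (stdAddChar (N := n)) := by
  induction β using Nat.twoStepInduction generalizing n with
  | zero =>
    obtain rfl : n = 1 := hn
    rw [jacobiSym.one_right, Int.cast_one, one_mul, Subsingleton.elim (c : ZMod 1) 1,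
      AddChar.mulShift_one]
  | one =>
    obtain rfl : n = p := hn.trans (pow_one p)
    exact quadraticGaussSum_stdAddChar_mulShift_prime hp hc
  | more β ih _ =>
    obtain rfl : n = p ^ β * p * p := hn
    have hodd : Odd p := (Fact.out : p.Prime).odd_of_ne_two hp
    have hcoprime : IsCoprime c p :=
      ((Nat.prime_iff_prime_int.mp Fact.out).coprime_iff_not_dvd.mpr hc).symm
    have hreduce {d : ℤ} (hd : ¬(p : ℤ) ∣ d) :=
      quadraticGaussSum_stdAddChar_mulShift_mul_mul (n := p ^ β) ((hodd.pow.mul hodd).mul hodd)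
        (isUnit_intCast_zmod_prime_pow hd (β + 2))
    have hone := hreduce (d := 1) (by exact_mod_cast Nat.Prime.not_dvd_one Fact.out)
    rw [Int.cast_one, Int.cast_one, AddChar.mulShift_one, AddChar.mulShift_one] at hone
    rw [hreduce hc, ih rfl, hone, jacobiSym.mul_right, jacobiSym.mul_right,
      mul_assoc _ _ (jacobiSym c p), ← sq,
      jacobiSym.sq_one (Int.isCoprime_iff_gcd_eq_one.mp hcoprime), mul_one, mul_left_comm]

theorem isLocalRing_zmod_prime_pow {β : ℕ} (hβ : β ≠ 0) : IsLocalRing (ZMod (p ^ β)) := by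
  have hp : p.Prime := Fact.out
  have : Fact (1 < p ^ β) := ⟨one_lt_pow₀ hp.one_lt hβ⟩
  refine IsLocalRing.of_isUnit_or_isUnit_one_sub_self fun x ↦ ?_
  obtain ⟨z, rfl⟩ := ZMod.intCast_surjective x
  by_cases hz : (p : ℤ) ∣ z
  · right
    have hz' : ¬(p : ℤ) ∣ 1 - z := fun h ↦
      (Nat.prime_iff_prime_int.mp hp).not_dvd_one ((dvd_sub_left hz).mp h)
    exact_mod_cast isUnit_intCast_zmod_prime_pow hz' β
  · exact Or.inl (isUnit_intCast_zmod_prime_pow hz β)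

theorem exists_sq_eq_zero_zmod_prime_pow {β : ℕ} (hβ : 2 ≤ β) :
    ∃ P : ZMod (p ^ β), P ^ 2 = 0 ∧ P ≠ 0 ∧ ∀ w, P * w = 0 → w ^ 3 = 0 := by
  have hp : p.Prime := Fact.out
  have hle : β / 2 ≤ β := Nat.div_le_self β 2
  refine ⟨(p ^ (β - β / 2) : ℕ), ?_, ?_, fun w hw ↦ ?_⟩
  · rw [← Nat.cast_pow, ← pow_mul, ZMod.natCast_eq_zero_iff]
    exact pow_dvd_pow p (by lia)
  · rw [Ne, ZMod.natCast_eq_zero_iff, Nat.pow_dvd_pow_iff_le_right hp.one_lt]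
    lia
  · have hdvd : p ^ (β / 2) ∣ w.val := by
      rw [← ZMod.natCast_zmod_val w, ← Nat.cast_mul, ZMod.natCast_eq_zero_iff] at hw
      refine Nat.dvd_of_mul_dvd_mul_left (pow_pos hp.pos (β - β / 2)) ?_
      rwa [← pow_add, Nat.sub_add_cancel hle]
    rw [← ZMod.natCast_zmod_val w, ← Nat.cast_pow, ZMod.natCast_eq_zero_iff]
    calc p ^ β ∣ (p ^ (β / 2)) ^ 3 := by rw [← pow_mul]; exact pow_dvd_pow p (by lia)
      _ ∣ w.val ^ 3 := pow_dvd_pow_of_dvd hdvd 3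

theorem kloostermanSum_stdAddChar_mulShift_one_one (hp : p ≠ 2) {β : ℕ} (hβ : 2 ≤ β) {l : ℤ}
    (hl : ¬(p : ℤ) ∣ l) :
    kloostermanSum ((stdAddChar (N := p ^ β)).mulShift l) 1 1 =
      (2 * jacobiSym l (p ^ β) * √(p ^ β : ℕ) *
        (gaussEpsilon (p ^ β) * stdAddChar (2 * l : ZMod (p ^ β))).re : ℝ) := by
  have hodd : Odd (p ^ β) := ((Fact.out : p.Prime).odd_of_ne_two hp).pow
  have := isLocalRing_zmod_prime_pow (p := p) (Nat.ne_zero_of_lt hβ)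
  obtain ⟨P, hP, hP0, hcube⟩ := exists_sq_eq_zero_zmod_prime_pow (p := p) hβ
  have hreal : stdAddChar (2 * l : ZMod (p ^ β)) *
      (jacobiSym l (p ^ β) * (gaussEpsilon (p ^ β) * √(p ^ β : ℕ))) =
        (jacobiSym l (p ^ β) * √(p ^ β : ℕ) : ℝ) *
          (gaussEpsilon (p ^ β) * stdAddChar (2 * l : ZMod (p ^ β))) := by
    push_cast
    ring
  rw [kloostermanSum_one_one_eq_two_mul_re
      (isPrimitive_mulShift_of_isUnit (isPrimitive_stdAddChar _)
        (isUnit_intCast_zmod_prime_pow hl β))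
      (isUnit_two_zmod_of_odd hodd) hP hP0 hcube,
    quadraticGaussSum_stdAddChar_mulShift_of_eq_prime_pow hp hl rfl,
    quadraticGaussSum_stdAddChar hodd, AddChar.mulShift_apply, mul_comm (l : ZMod (p ^ β)),
    hreal, Complex.re_ofReal_mul, ← mul_assoc, ← mul_assoc]

end PrimePower

open ZMod in
theorem kloosterman_eq_kloostermanSum (a b : ℤ) (c : ℕ) [NeZero c] :
    kloosterman a b c = kloostermanSum (stdAddChar (N := c)) a b := by
  classical
  set f : ZMod c → ℂ := fun x ↦
    if IsUnit x then stdAddChar ((a : ZMod c) * x + (b : ZMod c) * x⁻¹) else 0 with hf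
  have hsum : kloosterman a b c = ∑ x ∈ Finset.range c, f x := by
    refine Finset.sum_congr rfl fun x _ ↦ ?_
    simp only [hf, ZMod.isUnit_iff_coprime, Nat.Coprime]
    split_ifs with hx
    · have h := stdAddChar_coe (N := c) (a * x + b * ((x : ZMod c)⁻¹).val)
      push_cast at h
      rw [ZMod.natCast_zmod_val] at h
      exact h.symm
    · rfl
  rw [hsum, sum_range_natCast_zmod]
  refine (Fintype.sum_of_injective _ Units.val_injective _ _ (fun x hx ↦ if_neg hx)
    fun u ↦ ?_).symm
  rw [← ZMod.inv_coe_unit]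
  exact (if_pos u.isUnit).symm

theorem stmt7 (p : ℕ) (hp : p.Prime) (hodd : Odd p) (β : ℕ) (hβ : 2 ≤ β)
    (a b l : ℤ) (hab : ¬ ((p : ℤ) ∣ a * b))
    (hqr : IsSquare ((a * b : ℤ) : ZMod p))
    (hl : l ^ 2 ≡ a * b [ZMOD (p ^ β : ℕ)]) :
    kloosterman a b (p ^ β) =
      (2 * (jacobiSym l (p ^ β) : ℝ) * Real.sqrt (p ^ β : ℕ) *
        (((if (p ^ β) % 4 = 1 then (1 : ℂ) else Complex.I) *
          Complex.exp (2 * Real.pi * Complex.I * (2 * (l : ℂ)) / ((p ^ β : ℕ) : ℂ))).re) : ℝ) := by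
  have : Fact p.Prime := ⟨hp⟩
  have hp2 : p ≠ 2 := by rintro rfl; exact absurd hodd (by decide)
  have hpq : (p : ℤ) ∣ (p ^ β : ℕ) := by exact_mod_cast dvd_pow_self p (by lia : β ≠ 0)
  have hpl : ¬(p : ℤ) ∣ l := fun h ↦
    hab ((hl.of_dvd hpq).dvd_iff.mp (dvd_pow h two_ne_zero))
  have hl' : (l : ZMod (p ^ β)) ^ 2 = a * b := by
    exact_mod_cast (ZMod.intCast_eq_intCast_iff _ _ _).mpr hl
  have hexp : ZMod.stdAddChar (2 * l : ZMod (p ^ β)) =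
      Complex.exp (2 * Real.pi * Complex.I * (2 * (l : ℂ)) / ((p ^ β : ℕ) : ℂ)) := by
    exact_mod_cast ZMod.stdAddChar_coe (N := p ^ β) (2 * l)
  rw [kloosterman_eq_kloostermanSum,
    kloostermanSum_eq_of_sq_eq_mul _ (isUnit_intCast_zmod_prime_pow hpl β) hl',
    kloostermanSum_stdAddChar_mulShift_one_one hp2 hβ hpl, hexp, gaussEpsilon]
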